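/- Let ρ_AB be a separable density matrix on ℂ^n ⊗ ℂ^n such that the linear map Ψ_{B→A}^ρ : E ↦ Tr_B[(I_A ⊗ E) ρ_AB], from n×n complex matrices to n×n complex matrices, is bijective. Then Λ_A(ρ_AB) admits a preparation-and-measurement noncontextual model. -/

import Mathlib

open Matrix
open scoped Kronecker ComplexOrder BigOperators

noncomputable section

/-- A density matrix: positive semidefinite with trace 1. -/
def IsDensity {d : Type*} [Fintype d] [DecidableEq d] (ρ : Matrix d d ℂ) : Prop :=
  ρ.PosSemidef ∧ ρ.trace = 1

/-- Partial trace over the second (B) factor. -/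
def trB {m n : ℕ} (ρ : Matrix (Fin m × Fin n) (Fin m × Fin n) ℂ) :
    Matrix (Fin m) (Fin m) ℂ := fun i j => ∑ k, ρ (i, k) (j, k)

/-- Partial trace over the first (A) factor. -/
def trA {m n : ℕ} (ρ : Matrix (Fin m × Fin n) (Fin m × Fin n) ℂ) :
    Matrix (Fin n) (Fin n) ℂ := fun k l => ∑ i, ρ (i, k) (i, l)

/-- The set of states remotely preparable on Alice's side. -/
def LambdaA {m n : ℕ} (ρ : Matrix (Fin m × Fin n) (Fin m × Fin n) ℂ) :
    Set (Matrix (Fin m) (Fin m) ℂ) :=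
  {σ | IsDensity σ ∧ ∃ E : Matrix (Fin n) (Fin n) ℂ, E.PosSemidef ∧
    σ = trB (((1 : Matrix (Fin m) (Fin m) ℂ) ⊗ₖ E) * ρ)}

/-- The set of states remotely preparable on Bob's side. -/
def LambdaB {m n : ℕ} (ρ : Matrix (Fin m × Fin n) (Fin m × Fin n) ℂ) :
    Set (Matrix (Fin n) (Fin n) ℂ) :=
  {σ | IsDensity σ ∧ ∃ E : Matrix (Fin m) (Fin m) ℂ, E.PosSemidef ∧
    σ = trA ((E ⊗ₖ (1 : Matrix (Fin n) (Fin n) ℂ)) * ρ)}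

/-- A preparation-and-measurement noncontextual model for a set `K` of density matrices. -/
def HasNCModel {d : ℕ} (K : Set (Matrix (Fin d) (Fin d) ℂ)) : Prop :=
  ∃ (L : ℕ) (N ω : Fin L → Matrix (Fin d) (Fin d) ℂ),
    (∀ l, (N l).IsHermitian) ∧ (∀ l, IsDensity (ω l)) ∧
    (∀ ρ ∈ K, ∀ l, 0 ≤ (ρ * N l).trace) ∧
    (∀ ρ ∈ K, ∑ l, (ρ * N l).trace = 1) ∧
    (∀ ρ ∈ K, ∀ M : Matrix (Fin d) (Fin d) ℂ, M.PosSemidef → (1 - M).PosSemidef →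
      (ρ * M).trace = ∑ l, (ρ * N l).trace * (ω l * M).trace)

/-- Separability of a bipartite density matrix. -/
def Separable {m n : ℕ} (ρ : Matrix (Fin m × Fin n) (Fin m × Fin n) ℂ) : Prop :=
  ∃ (L : ℕ) (ω : Fin L → Matrix (Fin m) (Fin m) ℂ)
    (κ : Fin L → Matrix (Fin n) (Fin n) ℂ),
    (∀ l, IsDensity (ω l)) ∧ (∀ l, (κ l).PosSemidef) ∧ ρ = ∑ l, ω l ⊗ₖ κ l

/-!
Write `ρ = ∑ l, ω l ⊗ κ l`, so that `Ψ E = ∑ l, Tr (E κ l) • ω l`. A left inverse of `Ψ` recovers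
the weights `Tr (E κ l)` as linear functionals `σ ↦ Tr (σ N l)` of the prepared state `σ = Ψ E`, and
these are the weights of a noncontextual model with ontic states `ω l`. They are nonnegative because
`E` and `κ l` are positive semidefinite; being real on the Hermitian matrices of `Λ_A(ρ)`, they are
unchanged there when `N l` is replaced by its Hermitian part.
-/

section Trace

theorem trace_mul_nonneg_of_posSemidef {𝕜 d : Type*} [RCLike 𝕜] [Fintype d] {A B : Matrix d d 𝕜}
    (hA : A.PosSemidef) (hB : B.PosSemidef) : 0 ≤ (A * B).trace := by
  classical
  obtain ⟨C, rfl⟩ : ∃ C : Matrix d d 𝕜, B = Cᴴ * C := by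
    open scoped MatrixOrder in exact CStarAlgebra.nonneg_iff_eq_star_mul_self.mp hB.nonneg
  rw [← Matrix.mul_assoc, trace_mul_comm, ← Matrix.mul_assoc]
  exact (hA.mul_mul_conjTranspose_same C).trace_nonneg

theorem exists_trace_mul_eq {R m n : Type*} [CommSemiring R] [Fintype m] [Fintype n]
    (f : Matrix m n R →ₗ[R] R) : ∃ N : Matrix n m R, ∀ A, (A * N).trace = f A := by
  classical
  let N : Matrix n m R := of fun j i => f (single i j 1)
  have h_eq : traceLinearMap m R R ∘ₗ mulRightLinearMap m R N = f := by
    refine ext_linearMap _ fun i j => LinearMap.ext_ring ?_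
    simp [N, trace_single_mul]
  exact ⟨N, LinearMap.congr_fun h_eq⟩

variable {d : Type*} [Fintype d]

theorem trace_mul_realPart {A : Matrix d d ℂ} (hA : A.IsHermitian) (N : Matrix d d ℂ) :
    (A * (realPart N : Matrix d d ℂ)).trace = ((A * N).trace.re : ℂ) := by
  have h_conj : (A * Nᴴ).trace = star (A * N).trace := by
    rw [← trace_conjTranspose, conjTranspose_mul, hA.eq, trace_mul_comm]
  rw [realPart_apply_coe, star_eq_conjTranspose, Matrix.mul_smul, trace_smul, Matrix.mul_add,
    trace_add, h_conj, Complex.star_def, Complex.add_conj, Complex.real_smul]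
  push_cast
  ring

theorem exists_isHermitian_trace_mul_eq_re (f : Matrix d d ℂ →ₗ[ℂ] ℂ) :
    ∃ N : Matrix d d ℂ, N.IsHermitian ∧ ∀ A, A.IsHermitian → (A * N).trace = ((f A).re : ℂ) := by
  obtain ⟨N, hN⟩ := exists_trace_mul_eq f
  exact ⟨realPart N, (realPart N).property, fun A hA => by rw [trace_mul_realPart hA, hN]⟩

end Trace

theorem HasNCModel.of_linear_decomposition {d L : ℕ} {K : Set (Matrix (Fin d) (Fin d) ℂ)}
    (hK : ∀ σ ∈ K, IsDensity σ) {ω : Fin L → Matrix (Fin d) (Fin d) ℂ}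
    (hω : ∀ l, IsDensity (ω l)) (weight : Fin L → Matrix (Fin d) (Fin d) ℂ →ₗ[ℂ] ℂ)
    (h_nonneg : ∀ σ ∈ K, ∀ l, 0 ≤ weight l σ)
    (h_decomp : ∀ σ ∈ K, σ = ∑ l, weight l σ • ω l) : HasNCModel K := by
  choose N hN_herm hN using fun l => exists_isHermitian_trace_mul_eq_re (weight l)
  have hN_weight : ∀ σ ∈ K, ∀ l, (σ * N l).trace = weight l σ := fun σ hσ l =>
    (hN l σ (hK σ hσ).1.isHermitian).trans (Complex.eq_re_of_ofReal_le (h_nonneg σ hσ l)).symm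
  have h_trace : ∀ σ ∈ K, ∀ M : Matrix (Fin d) (Fin d) ℂ,
      (σ * M).trace = ∑ l, (σ * N l).trace * (ω l * M).trace := fun σ hσ M => by
    conv_lhs => rw [h_decomp σ hσ]
    simp only [hN_weight σ hσ, Finset.sum_mul, trace_sum, smul_mul, trace_smul, smul_eq_mul]
  refine ⟨L, N, ω, hN_herm, hω, fun σ hσ l => ?_, fun σ hσ => ?_,
    fun σ hσ M _ _ => h_trace σ hσ M⟩
  · exact (h_nonneg σ hσ l).trans_eq (hN_weight σ hσ l).symm
  · simpa only [Matrix.mul_one, (hω _).2, mul_one, (hK σ hσ).2] using (h_trace σ hσ 1).symm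

section Steering

variable {m n : ℕ}

/-- The partial trace `trB` as a linear map. -/
def trBLinearMap :
    Matrix (Fin m × Fin n) (Fin m × Fin n) ℂ →ₗ[ℂ] Matrix (Fin m) (Fin m) ℂ where
  toFun := trB
  map_add' ρ τ := by ext i j; simp only [trB, Matrix.add_apply, Finset.sum_add_distrib]
  map_smul' c ρ := by
    ext i j; simp only [trB, Matrix.smul_apply, Finset.smul_sum, RingHom.id_apply]

theorem trB_kronecker (A : Matrix (Fin m) (Fin m) ℂ) (B : Matrix (Fin n) (Fin n) ℂ) :
    trB (A ⊗ₖ B) = B.trace • A := by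
  ext i j
  simp only [trB, kroneckerMap_apply, Matrix.smul_apply, smul_eq_mul, trace, diag_apply,
    ← Finset.mul_sum, mul_comm]

/-- The map `Ψ_{B→A}^ρ`, sending an effect `E` on the second factor to the unnormalized state
`Tr_B[(I ⊗ E) ρ]` it prepares on the first; bundled as a linear map so that it can be inverted
linearly. -/
def steeringMap (ρ : Matrix (Fin m × Fin n) (Fin m × Fin n) ℂ) :
    Matrix (Fin n) (Fin n) ℂ →ₗ[ℂ] Matrix (Fin m) (Fin m) ℂ :=
  trBLinearMap ∘ₗ LinearMap.mulRight ℂ ρ ∘ₗ kroneckerBilinear (R := ℂ) 1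

theorem steeringMap_apply (ρ : Matrix (Fin m × Fin n) (Fin m × Fin n) ℂ)
    (E : Matrix (Fin n) (Fin n) ℂ) :
    steeringMap ρ E = trB (((1 : Matrix (Fin m) (Fin m) ℂ) ⊗ₖ E) * ρ) :=
  rfl

theorem steeringMap_sum_kronecker {ι : Type*} [Fintype ι] (ω : ι → Matrix (Fin m) (Fin m) ℂ)
    (κ : ι → Matrix (Fin n) (Fin n) ℂ) (E : Matrix (Fin n) (Fin n) ℂ) :
    steeringMap (∑ l, ω l ⊗ₖ κ l) E = ∑ l, (E * κ l).trace • ω l := calc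
  steeringMap (∑ l, ω l ⊗ₖ κ l) E = trBLinearMap (∑ l, ω l ⊗ₖ (E * κ l)) := by
    simp only [steeringMap_apply, Finset.mul_sum, ← mul_kronecker_mul, Matrix.one_mul]
    rfl
  _ = ∑ l, (E * κ l).trace • ω l := by
    rw [map_sum]
    exact Finset.sum_congr rfl fun l _ => trB_kronecker (ω l) (E * κ l)

theorem separable_invertible_to_noncontextual_general
    (ρ : Matrix (Fin m × Fin n) (Fin m × Fin n) ℂ) (hsep : Separable ρ)
    (hinj : Function.Injective (steeringMap ρ)) : HasNCModel (LambdaA ρ) := by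
  obtain ⟨L, ω, κ, hω, hκ, rfl⟩ := hsep
  set Ψ := steeringMap (∑ l, ω l ⊗ₖ κ l)
  obtain ⟨Φ, hΦ⟩ := Ψ.exists_leftInverse_of_injective (LinearMap.ker_eq_bot.mpr hinj)
  let weight l := traceLinearMap (Fin n) ℂ ℂ ∘ₗ LinearMap.mulRight ℂ (κ l) ∘ₗ Φ
  have h_weight (l : Fin L) (E : Matrix (Fin n) (Fin n) ℂ) : weight l (Ψ E) = (E * κ l).trace :=
    congrArg (fun F => (F * κ l).trace) (LinearMap.congr_fun hΦ E)
  refine .of_linear_decomposition (fun σ hσ => hσ.1) hω weight ?_ ?_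
  · rintro _ ⟨-, E, hE, rfl⟩ l
    exact (trace_mul_nonneg_of_posSemidef hE (hκ l)).trans_eq (h_weight l E).symm
  · rintro _ ⟨-, E, -, rfl⟩
    change Ψ E = ∑ l, weight l (Ψ E) • ω l
    simp only [h_weight]
    exact steeringMap_sum_kronecker ω κ E

end Steering

theorem separable_invertible_to_noncontextual {n : ℕ}
    (ρ : Matrix (Fin n × Fin n) (Fin n × Fin n) ℂ) (hρ : IsDensity ρ)
    (hsep : Separable ρ)
    (hbij : Function.Bijective (fun E : Matrix (Fin n) (Fin n) ℂ =>
      trB (((1 : Matrix (Fin n) (Fin n) ℂ) ⊗ₖ E) * ρ))) :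
    HasNCModel (LambdaA ρ) :=
  separable_invertible_to_noncontextual_general ρ hsep hbij.injective
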